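/- Let (k : K → X, f : X → M) be a Schreier extension. Then f is a cokernel of k: for every monoid Z and every monoid homomorphism g : X → Z such that g(k(a)) = 0 for all a ∈ K, there exists a unique monoid homomorphism φ : M → Z with φ ∘ f = g. -/

import Mathlib

/-- A monoid extension: `K`, `X` additive monoids (not assumed commutative),
`M` a multiplicative monoid, `k : K → X` an injective monoid homomorphism whose image
is `{x | f x = 1}`, and `f : X → M` a surjective monoid homomorphism. -/
structure MonoidExtension {K X M : Type*} [AddMonoid K] [AddMonoid X] [Monoid M]
    (k : K → X) (f : X → M) : Prop where
  k_add : ∀ a b : K, k (a + b) = k a + k b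
  k_zero : k 0 = 0
  k_inj : Function.Injective k
  ker_eq : ∀ x : X, f x = 1 ↔ x ∈ Set.range k
  f_add : ∀ x y : X, f (x + y) = f x * f y
  f_zero : f 0 = 1
  f_surj : Function.Surjective f

/-- The set `B_m` of representatives of `m`. -/
def Reps {K X M : Type*} [AddMonoid K] [AddMonoid X] [Monoid M]
    (k : K → X) (f : X → M) (m : M) : Set X :=
  {u | f u = m ∧ ∀ x : X, f x = m → ∃! a : K, x = k a + u}

/-- A monoid extension is a Schreier extension if every `m` has a representative. -/
def IsSchreier {K X M : Type*} [AddMonoid K] [AddMonoid X] [Monoid M]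
    (k : K → X) (f : X → M) : Prop :=
  ∀ m : M, (Reps k f m).Nonempty

/-- The weakly Schreier condition on `k` and `f`: the Schreier condition with the uniqueness of `a`
dropped, so that every fibre of `f` contains some `u` and lies in `k(K) + u`. -/
def IsWeaklySchreier {K X M : Type*} [Add X] (k : K → X) (f : X → M) : Prop :=
  ∀ m : M, ∃ u : X, f u = m ∧ ∀ x : X, f x = m → ∃ a : K, x = k a + u

theorem IsSchreier.isWeaklySchreier {K X M : Type*} [AddMonoid K] [AddMonoid X] [Monoid M]
    {k : K → X} {f : X → M} (hS : IsSchreier k f) : IsWeaklySchreier k f := fun m =>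
  let ⟨u, hu, hcover⟩ := hS m
  ⟨u, hu, fun x hx => (hcover x hx).exists⟩

namespace IsWeaklySchreier

variable {K X M Z : Type*} [Add X] {k : K → X} {f : X → M}

theorem surjective (hW : IsWeaklySchreier k f) : Function.Surjective f := fun m =>
  let ⟨u, hu, _⟩ := hW m
  ⟨u, hu⟩

theorem factorsThrough [AddZeroClass Z] (hW : IsWeaklySchreier k f) {g : X → Z}
    (hg_add : ∀ x y : X, g (x + y) = g x + g y) (hgk : ∀ a : K, g (k a) = 0) :
    g.FactorsThrough f := by
  intro x y hxy
  obtain ⟨u, -, hcover⟩ := hW (f y)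
  have eq_on_fibre : ∀ z, f z = f y → g z = g u := by
    intro z hz
    obtain ⟨a, rfl⟩ := hcover z hz
    rw [hg_add, hgk, zero_add]
  exact (eq_on_fibre x hxy).trans (eq_on_fibre y rfl).symm

end IsWeaklySchreier

theorem existsUnique_hom_of_factorsThrough {X M Z : Type*} [AddZero X] [MulOne M] [AddZero Z]
    {f : X → M} (hf : Function.Surjective f)
    (hf_add : ∀ x y : X, f (x + y) = f x * f y) (hf_zero : f 0 = 1)
    {g : X → Z} (hg_add : ∀ x y : X, g (x + y) = g x + g y) (hg_zero : g 0 = 0)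
    (hgf : g.FactorsThrough f) :
    ∃! φ : M → Z, (∀ m m' : M, φ (m * m') = φ m + φ m') ∧ φ 1 = 0 ∧
      ∀ x : X, φ (f x) = g x := by
  obtain ⟨φ, hφ⟩ : ∃ φ : M → Z, ∀ x, φ (f x) = g x :=
    ⟨Function.extend f g 0, hgf.extend_apply 0⟩
  refine ⟨φ, ⟨hf.forall₂.2 fun x y => ?_, ?_, hφ⟩, fun ψ hψ => ?_⟩
  · rw [← hf_add, hφ, hφ, hφ, hg_add]
  · rw [← hf_zero, hφ, hg_zero]
  · exact hf.injective_comp_right (funext fun x => (hψ.2.2 x).trans (hφ x).symm)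

theorem schreier_cokernel_general {K X M Z : Type*} [AddZero X] [MulOne M] [AddZeroClass Z]
    {k : K → X} {f : X → M} (hW : IsWeaklySchreier k f)
    (hf_add : ∀ x y : X, f (x + y) = f x * f y) (hf_zero : f 0 = 1)
    {g : X → Z} (hg_add : ∀ x y : X, g (x + y) = g x + g y) (hg_zero : g 0 = 0)
    (hgk : ∀ a : K, g (k a) = 0) :
    ∃! φ : M → Z, (∀ m m' : M, φ (m * m') = φ m + φ m') ∧ φ 1 = 0 ∧
      ∀ x : X, φ (f x) = g x :=
  existsUnique_hom_of_factorsThrough hW.surjective hf_add hf_zero hg_add hg_zero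
    (hW.factorsThrough hg_add hgk)

/-- Proposition 2.6 (prop:f_normal): for a Schreier extension, `f` is a cokernel of `k`:
every monoid homomorphism `g : X → Z` with `g ∘ k = 0` factors uniquely through `f`
via a monoid homomorphism `φ : M → Z`. -/
theorem schreier_cokernel {K X M Z : Type*} [AddMonoid K] [AddMonoid X] [Monoid M]
    [AddMonoid Z]
    (k : K → X) (f : X → M) (hE : MonoidExtension k f) (hS : IsSchreier k f)
    (g : X → Z) (hg_add : ∀ x y : X, g (x + y) = g x + g y) (hg_zero : g 0 = 0)
    (hgk : ∀ a : K, g (k a) = 0) :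
    ∃! φ : M → Z, (∀ m m' : M, φ (m * m') = φ m + φ m') ∧ φ 1 = 0 ∧
      ∀ x : X, φ (f x) = g x :=
  schreier_cokernel_general hS.isWeaklySchreier hE.f_add hE.f_zero hg_add hg_zero hgk
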